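/- If X is a smooth fan and E(X) is not dense in X, then E(X) has a point of zero-dimensionality; in particular, E(X) is not homeomorphic to complete Erdős space 𝔈_c. -/

import Mathlib

/-!
A smooth fan `X` is a union of legs, the leg in direction `c` being
`{(τ * c, τ) : 0 ≤ τ ≤ φ c}` with `φ` upper semicontinuous, and its endpoints are the tops of the
nontrivial legs. Both facts follow from `mem_of_connected`: gaps of the Cantor set together with a
horizontal level cut the fan into clopen pieces, so a connected set cannot miss a point in the
interior of a leg which it needs to pass.

If the endpoints are not dense, there are a height `t > 0` and an interval of directions, bounded
by gaps of the Cantor set, in which some legs reach height `t` but none has its endpoint there.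
The directions whose legs reach height `t` form a compact set, so by Baire's theorem `φ` restricted
to it has a point of continuity `c` (`IsSmoothFan.exists_lsc_leg`). The endpoints above height `t`
with direction in a small interval around `c` bounded by gaps form a clopen set of endpoints, which
is close to the top of the leg in direction `c` by continuity; hence this top is a point of
zero-dimensionality (`IsSmoothFan.exists_zeroDimPointAt`).

Complete Erdős space has no such point, since by `erdos_no_bounded_clopen` its nonempty clopen
subsets are unbounded.
-/

open Set Topology

noncomputable section

namespace SmoothFanPaper

/-- `A` is an arc (a homeomorphic copy of `[0,1]`) with endpoints `a` and `b`. -/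
def IsArc {α : Type*} [TopologicalSpace α] (A : Set α) (a b : α) : Prop :=
  ∃ h : (Set.Icc (0:ℝ) 1) ≃ₜ A,
    (h ⟨0, Set.left_mem_Icc.mpr zero_le_one⟩ : α) = a ∧
    (h ⟨1, Set.right_mem_Icc.mpr zero_le_one⟩ : α) = b

/-- The order of `x` in `X` is at least `n`: there are `n` arcs contained in `X`, each with
`x` as an endpoint, which pairwise meet only in `x`. -/
def OrderAtLeast {α : Type*} [TopologicalSpace α] (X : Set α) (x : α) (n : ℕ) : Prop :=
  ∃ A : Fin n → Set α, (∀ i, A i ⊆ X) ∧ (∀ i, ∃ b, IsArc (A i) x b) ∧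
    ∀ i j, i ≠ j → A i ∩ A j = {x}

/-- The set of endpoints of `X`: points of order exactly `1`. -/
def Endpoints {α : Type*} [TopologicalSpace α] (X : Set α) : Set α :=
  {x | x ∈ X ∧ OrderAtLeast X x 1 ∧ ¬ OrderAtLeast X x 2}

/-- The Cantor fan: the union of all straight-line segments from the origin to the points of
`cantorSet × {1}` in the plane. -/
def CantorFan : Set (ℝ × ℝ) :=
  {q | ∃ c ∈ cantorSet, ∃ t ∈ Set.Icc (0:ℝ) 1, q = (t * c, t)}

/-- The cone point of the Cantor fan. -/
def fanVertex : ℝ × ℝ := (0, 0)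

/-- A smooth fan: a non-degenerate subcontinuum of the Cantor fan containing the cone point,
whose cone point (the vertex) has order at least 2.  (Every statement below about smooth fans
is invariant under homeomorphisms, so we may realize all smooth fans concretely as such
subcontinua.) -/
structure IsSmoothFan (X : Set (ℝ × ℝ)) : Prop where
  subset_fan : X ⊆ CantorFan
  isCompact : IsCompact X
  isConnected : IsConnected X
  nondegenerate : ∃ x ∈ X, ∃ y ∈ X, x ≠ y
  vertex_mem : fanVertex ∈ X
  vertex_order : OrderAtLeast X fanVertex 2

/-- Two subsets of `(0,1)` are order isomorphic if some order preserving self-homeomorphism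
of `[0,1]` maps one onto the other. -/
def OrderIsomorphic (A B : Set ℝ) : Prop :=
  ∃ h : (Set.Icc (0:ℝ) 1) ≃ₜ (Set.Icc (0:ℝ) 1), StrictMono h ∧
    Subtype.val '' (⇑h '' (Subtype.val ⁻¹' A)) = B

/-- The canonical parametrization of (subsets of) the leg of the Cantor fan through `e`:
a point of the leg is sent to its height, rescaled so that `e` is at height `1`. -/
def legParam (e : ℝ × ℝ) (S : Set (ℝ × ℝ)) : Set ℝ :=
  (fun q : ℝ × ℝ => q.2 / e.2) '' S

/-- The trace of the closure of a set `T` on the open leg `pe ∖ {p, e}` (where `p` is the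
vertex and `pe = segment ℝ p e` is the unique arc in a smooth fan from `p` to an endpoint
`e`), viewed as a subset of `(0,1)` via the canonical parametrization of the leg. -/
def legTrace (T : Set (ℝ × ℝ)) (e : ℝ × ℝ) : Set ℝ :=
  legParam e ((closure T ∩ segment ℝ fanVertex e) \ {fanVertex, e})

/-- `K` enumerates a countably infinite set `𝒦` of compact subsets of `(0,1)`, no two of
which are order isomorphic. -/
def KFamily (K : ℕ → Set ℝ) : Prop :=
  (∀ n, IsCompact (K n) ∧ K n ⊆ Set.Ioo (0:ℝ) 1) ∧
    ∀ m n, m ≠ n → ¬ OrderIsomorphic (K m) (K n)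

/-- `X` is a `𝒦`-fan with witnessing endpoint set `E_𝒦 = {e n : n ∈ ℕ}`. -/
structure IsKFan (K : ℕ → Set ℝ) (X : Set (ℝ × ℝ)) (e : ℕ → ℝ × ℝ) : Prop where
  fan : IsSmoothFan X
  mem_endpoints : ∀ n, e n ∈ Endpoints X
  trace_iso : ∀ n, OrderIsomorphic (legTrace (Endpoints X) (e n)) (K n)
  trace_not_iso : ∀ x ∈ Endpoints X \ Set.range e, ∀ n,
    ¬ OrderIsomorphic (legTrace (Endpoints X) x) (K n)
  meets_closure : ∀ x ∈ Endpoints X \ Set.range e,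
    ((closure (Set.range e) ∩ segment ℝ fanVertex x) \ {fanVertex}).Nonempty

/-- A smooth fan is endpoint rigid if every self-homeomorphism fixes every endpoint. -/
def EndpointRigid (X : Set (ℝ × ℝ)) : Prop :=
  ∀ h : X ≃ₜ X, ∀ x : X, (x : ℝ × ℝ) ∈ Endpoints X → ((h x : X) : ℝ × ℝ) = (x : ℝ × ℝ)

/-- Complete Erdős space `𝔈_c`: the points of the Hilbert space `ℓ²` all of whose
coordinates lie in `{0} ∪ {1/m : m ≥ 1}`. -/
def ErdosSpace : Set (lp (fun _ : ℕ => ℝ) 2) :=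
  {x | ∀ n : ℕ, x n = 0 ∨ ∃ m : ℕ, 0 < m ∧ x n = 1 / m}

/-- `z` is a point of zero-dimensionality of the space it lives in: it has a neighborhood
basis of clopen subsets. -/
def ZeroDimPointAt {α : Type*} [TopologicalSpace α] (z : α) : Prop :=
  ∀ U ∈ nhds z, ∃ V : Set α, IsClopen V ∧ z ∈ V ∧ V ⊆ U
/-- `L₀^φ = {(x,y) : x ∈ C, 0 ≤ y ≤ φ(x)}`, over the Cantor set. -/
def L0 (φ : ℝ → ℝ) : Set (ℝ × ℝ) :=
  {q | q.1 ∈ cantorSet ∧ 0 ≤ q.2 ∧ q.2 ≤ φ q.1}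

/-- `G₀^φ = {(x,φ(x)) : x ∈ C, φ(x) > 0}`, over the Cantor set. -/
def G0 (φ : ℝ → ℝ) : Set (ℝ × ℝ) :=
  {q | q.1 ∈ cantorSet ∧ 0 < q.2 ∧ q.2 = φ q.1}

/-- The setoid on `L₀^φ` identifying the set `C × {0}` to a point. -/
def L0Setoid (φ : ℝ → ℝ) : Setoid (L0 φ) where
  r a b := a = b ∨ ((a : ℝ × ℝ).2 = 0 ∧ (b : ℝ × ℝ).2 = 0)
  iseqv := by
    constructor
    · exact fun _ => Or.inl rfl
    · rintro a b (rfl | ⟨h1, h2⟩)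
      · exact Or.inl rfl
      · exact Or.inr ⟨h2, h1⟩
    · rintro a b c (rfl | ⟨h1, h2⟩) (rfl | ⟨h3, h4⟩)
      · exact Or.inl rfl
      · exact Or.inr ⟨h3, h4⟩
      · exact Or.inr ⟨h1, h2⟩
      · exact Or.inr ⟨h1, h4⟩

/-- The quotient space `L₀^φ / (C × {0})`. -/
def L0Quot (φ : ℝ → ℝ) : Type := Quotient (L0Setoid φ)

instance (φ : ℝ → ℝ) : TopologicalSpace (L0Quot φ) :=
  inferInstanceAs (TopologicalSpace (Quotient (L0Setoid φ)))

/-- The quotient projection `L₀^φ → L₀^φ / (C × {0})`. -/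
def L0Proj (φ : ℝ → ℝ) : L0 φ → L0Quot φ := Quotient.mk (L0Setoid φ)

/-- The setoid on `E × [0,1]` identifying `E × {0}` to a point. -/
def coneSetoid (E : Type*) : Setoid (E × Set.Icc (0:ℝ) 1) where
  r a b := a = b ∨ ((a.2 : ℝ) = 0 ∧ (b.2 : ℝ) = 0)
  iseqv := by
    constructor
    · exact fun _ => Or.inl rfl
    · rintro a b (rfl | ⟨h1, h2⟩)
      · exact Or.inl rfl
      · exact Or.inr ⟨h2, h1⟩
    · rintro a b c (rfl | ⟨h1, h2⟩) (rfl | ⟨h3, h4⟩)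
      · exact Or.inl rfl
      · exact Or.inr ⟨h3, h4⟩
      · exact Or.inr ⟨h1, h2⟩
      · exact Or.inr ⟨h1, h4⟩

/-- The cone over a space `E`: the quotient `(E × [0,1]) / (E × {0})`. -/
def Cone (E : Type*) [TopologicalSpace E] : Type _ := Quotient (coneSetoid E)

instance (E : Type*) [TopologicalSpace E] : TopologicalSpace (Cone E) :=
  inferInstanceAs (TopologicalSpace (Quotient (coneSetoid E)))

/-- A point of the one-point compactification of the disjoint union of the fans `X i`
is to be glued iff it is `∞` or the vertex of one of the fans. -/
def isGluedPoint {ι : Type*} (X : ι → Set (ℝ × ℝ)) :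
    OnePoint (Σ i : ι, X i) → Prop :=
  fun a => a.elim True (fun q => (q.2 : ℝ × ℝ) = fanVertex)

/-- The setoid gluing the vertices (and the point at infinity) of the fans `X i`. -/
def fanSumSetoid {ι : Type*} (X : ι → Set (ℝ × ℝ)) :
    Setoid (OnePoint (Σ i : ι, X i)) where
  r a b := a = b ∨ (isGluedPoint X a ∧ isGluedPoint X b)
  iseqv := by
    constructor
    · exact fun _ => Or.inl rfl
    · rintro a b (rfl | ⟨h1, h2⟩)
      · exact Or.inl rfl
      · exact Or.inr ⟨h2, h1⟩
    · rintro a b c (rfl | ⟨h1, h2⟩) (rfl | ⟨h3, h4⟩)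
      · exact Or.inl rfl
      · exact Or.inr ⟨h3, h4⟩
      · exact Or.inr ⟨h1, h2⟩
      · exact Or.inr ⟨h1, h4⟩

/-- The sum `Σᵢ Xᵢ` of a (finite or countably infinite) family of smooth fans: the quotient of
the one-point compactification of their disjoint union identifying the set consisting of all
the vertices and the point at infinity to a single point.  (For a finite family, `∞` is an
isolated point which is absorbed by the vertex class, so this agrees with the quotient of the
plain disjoint union identifying the vertices.) -/
def FanSum {ι : Type*} (X : ι → Set (ℝ × ℝ)) : Type _ := Quotient (fanSumSetoid X)

instance {ι : Type*} (X : ι → Set (ℝ × ℝ)) : TopologicalSpace (FanSum X) :=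
  inferInstanceAs (TopologicalSpace (Quotient (fanSumSetoid X)))

/-! ### Gaps of the Cantor set -/

lemma cantorSet_interval_length (n : ℕ) :
    ∀ x y : ℝ, x ≤ y → Icc x y ⊆ cantorSet → y - x ≤ (1 / 3) ^ n := by
  induction n with
  | zero =>
    intro x y hxy h
    have h1 := cantorSet_subset_unitInterval (h (left_mem_Icc.2 hxy))
    have h2 := cantorSet_subset_unitInterval (h (right_mem_Icc.2 hxy))
    simp only [pow_zero]
    linarith [h1.1, h2.2]
  | succ n ih =>
    intro x y hxy h
    -- a point of the Cantor set is `w / 3` or `(2 + w) / 3` with `w` again in the Cantor set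
    have split : ∀ z ∈ cantorSet, (z ≤ 1 / 3 ∧ 3 * z ∈ cantorSet) ∨
        (2 / 3 ≤ z ∧ 3 * z - 2 ∈ cantorSet) := by
      intro z hz
      rw [cantorSet_eq_union_halves] at hz
      rcases hz with ⟨w, hw, rfl⟩ | ⟨w, hw, rfl⟩
      · left
        have := cantorSet_subset_unitInterval hw
        refine ⟨by dsimp only; linarith [this.2], ?_⟩
        dsimp only
        rwa [mul_div_cancel₀ w (by norm_num)]
      · right
        have := cantorSet_subset_unitInterval hw
        refine ⟨by dsimp only; linarith [this.1], ?_⟩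
        dsimp only
        rwa [mul_div_cancel₀ (2 + w) (by norm_num), add_sub_cancel_left]
    have hbound : 3 * y - 3 * x ≤ (1 / 3 : ℝ) ^ n := by
      by_cases hy : y < 2 / 3
      · refine ih (3 * x) (3 * y) (by linarith) fun z hz => ?_
        rcases split (z / 3) (h ⟨by linarith [hz.1], by linarith [hz.2]⟩) with h1 | h1
        · convert h1.2 using 1; ring
        · linarith [h1.1, hz.2]
      · by_cases hx : 1 / 3 < x
        · have := ih (3 * x - 2) (3 * y - 2) (by linarith) fun z hz => ?_
          · linarith
          rcases split ((z + 2) / 3) (h ⟨by linarith [hz.1], by linarith [hz.2]⟩) with h1 | h1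
          · linarith [h1.1, hz.1]
          · convert h1.2 using 1; ring
        · rcases split (1 / 2) (h ⟨by linarith, by linarith⟩) with h1 | h1 <;> linarith [h1.1]
    rw [pow_succ]
    linarith

lemma exists_notMem_cantorSet {x y : ℝ} (hxy : x < y) : ∃ a ∈ Ioo x y, a ∉ cantorSet := by
  by_contra! hcon
  obtain ⟨n, hn⟩ := exists_pow_lt_of_lt_one (show 0 < (y - x) / 3 by linarith)
    (show (1 / 3 : ℝ) < 1 by norm_num)
  have := cantorSet_interval_length n ((2 * x + y) / 3) ((x + 2 * y) / 3) (by linarith)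
    fun z hz => hcon z ⟨by linarith [hz.1], by linarith [hz.2]⟩
  linarith

/-- Points of the Cantor set have arbitrarily small neighbourhoods bounded by gaps. -/
lemma exists_cantor_gap_nhd (c : ℝ) {δ : ℝ} (hδ : 0 < δ) :
    ∃ a b, a ∉ cantorSet ∧ b ∉ cantorSet ∧ c - δ < a ∧ a < c ∧ c < b ∧ b < c + δ := by
  obtain ⟨a, ha, ha'⟩ := exists_notMem_cantorSet (show c - δ < c by linarith)
  obtain ⟨b, hb, hb'⟩ := exists_notMem_cantorSet (show c < c + δ by linarith)
  exact ⟨a, b, ha', hb', ha.1, ha.2, hb.1, hb.2⟩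

/-! ### Connected subsets of the Cantor fan -/

/-- The open part of the plane above height `s` and strictly between the directions `a` and `b`. -/
def wedge (a b s : ℝ) : Set (ℝ × ℝ) := {p | s < p.2 ∧ a * p.2 < p.1 ∧ p.1 < b * p.2}

/-- The open set of points below height `s` or strictly outside the directions from `a` to `b`. -/
def coWedge (a b s : ℝ) : Set (ℝ × ℝ) := {p | p.2 < s ∨ p.1 < a * p.2 ∨ b * p.2 < p.1}

lemma isOpen_wedge (a b s : ℝ) : IsOpen (wedge a b s) := by
  simp only [wedge, ofPred_and]
  exact (isOpen_lt (by fun_prop) (by fun_prop)).inter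
    ((isOpen_lt (by fun_prop) (by fun_prop)).inter (isOpen_lt (by fun_prop) (by fun_prop)))

lemma isOpen_coWedge (a b s : ℝ) : IsOpen (coWedge a b s) := by
  simp only [coWedge, ofPred_or]
  exact (isOpen_lt (by fun_prop) (by fun_prop)).union
    ((isOpen_lt (by fun_prop) (by fun_prop)).union (isOpen_lt (by fun_prop) (by fun_prop)))

lemma disjoint_wedge (a b s : ℝ) : Disjoint (wedge a b s) (coWedge a b s) := by
  refine disjoint_left.2 fun p ⟨h1, h2, h3⟩ h => ?_
  rcases h with h | h | h <;> linarith

/-- If `a` and `b` lie in gaps of the Cantor set, then a subset of the fan can leave the wedge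
between `a` and `b` above level `s` only through that level. -/
lemma subset_wedge_union {K : Set (ℝ × ℝ)} (hK : K ⊆ CantorFan) {a b s : ℝ} (ha : a ∉ cantorSet)
    (hb : b ∉ cantorSet) (hs : 0 < s) (hlevel : ∀ r, a < r → r < b → (s * r, s) ∉ K) :
    K ⊆ wedge a b s ∪ coWedge a b s := by
  intro p hpK
  obtain ⟨r, hr, τ, hτ, rfl⟩ := hK hpK
  rcases lt_or_ge τ s with h | h
  · exact Or.inr (Or.inl h)
  have hτ0 : 0 < τ := hs.trans_le h
  rcases lt_trichotomy r a with h5 | rfl | h5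
  · right; right; left
    change τ * r < a * τ
    nlinarith
  · exact absurd hr ha
  rcases lt_trichotomy r b with h6 | rfl | h6
  · rcases h.eq_or_lt with rfl | h
    · exact absurd hpK (hlevel r h5 h6)
    · left
      refine ⟨h, ?_, ?_⟩ <;> dsimp only <;> nlinarith
  · exact absurd hr hb
  · right; right; right
    change b * τ < τ * r
    nlinarith

/-- A closed connected subset of the Cantor fan containing the point `(t * c, t)` and some point
outside the part of that leg above height `s` must pass through the point of height `s` on the leg.
Otherwise two gaps of the Cantor set and the level `s` cut out a clopen piece. -/
lemma mem_of_connected {K : Set (ℝ × ℝ)} (hK : K ⊆ CantorFan) (hc : IsClosed K)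
    (hp : IsPreconnected K) {c t s : ℝ} (hs : 0 < s) (hst : s < t) (hm : (t * c, t) ∈ K)
    {q : ℝ × ℝ} (hq : q ∈ K) (hqc : q.1 = q.2 * c → q.2 ≤ s) : (s * c, s) ∈ K := by
  by_contra hn
  have hopen : IsOpen {r : ℝ | (s * r, s) ∉ K} :=
    hc.isOpen_compl.preimage (f := fun r : ℝ => (s * r, s)) (by fun_prop)
  obtain ⟨δ₁, hδ₁, hball⟩ := Metric.isOpen_iff.1 hopen c hn
  -- shrink the neighbourhood of `c` so that it also avoids the leg through `q`
  obtain ⟨δ, hδ, hδle, hqδ⟩ : ∃ δ > 0, δ ≤ δ₁ ∧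
      (s < q.2 → q.1 < (c - δ) * q.2 ∨ (c + δ) * q.2 < q.1) := by
    by_cases hsq : s < q.2
    · have hne : q.1 - q.2 * c ≠ 0 := fun h => not_le.2 hsq (hqc (by linarith))
      have hq0 : 0 < q.2 := hs.trans hsq
      have habs := abs_pos.2 hne
      refine ⟨min δ₁ (|q.1 - q.2 * c| / q.2 / 2), by positivity, min_le_left _ _, fun _ => ?_⟩
      have hlt : min δ₁ (|q.1 - q.2 * c| / q.2 / 2) * q.2 < |q.1 - q.2 * c| := by
        calc _ ≤ |q.1 - q.2 * c| / q.2 / 2 * q.2 := by gcongr; exact min_le_right _ _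
          _ = |q.1 - q.2 * c| / 2 := by field_simp
          _ < _ := by linarith
      rcases lt_abs.1 hlt with h | h
      · right; linarith
      · left; linarith
    · exact ⟨δ₁, hδ₁, le_rfl, fun h => absurd h hsq⟩
  obtain ⟨a, b, ha, hb, h1, h2, h3, h4⟩ := exists_cantor_gap_nhd c hδ
  have hcov : K ⊆ wedge a b s ∪ coWedge a b s := by
    refine subset_wedge_union hK ha hb hs fun r har hrb => hball ?_
    rw [Metric.mem_ball, Real.dist_eq, abs_lt]
    constructor <;> linarith
  have ht0 : 0 < t := hs.trans hst
  obtain ⟨p, -, hp1, hp2⟩ := hp _ _ (isOpen_wedge a b s) (isOpen_coWedge a b s) hcov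
    ⟨_, hm, hst, by dsimp only; nlinarith, by dsimp only; nlinarith⟩
    ⟨q, hq, by
      rcases lt_trichotomy q.2 s with h | h | h
      · exact Or.inl h
      · by_contra hcon
        obtain h' | h' := hcov hq
        · linarith [h'.1]
        · exact hcon h'
      · rcases hqδ h with h' | h'
        · right; left; nlinarith
        · right; right; nlinarith⟩
  exact disjoint_left.1 (disjoint_wedge a b s) hp1 hp2

/-! ### Endpoints of a smooth fan -/

lemma IsSmoothFan.below {X : Set (ℝ × ℝ)} (hX : IsSmoothFan X) {c t s : ℝ} (hs : 0 ≤ s)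
    (hst : s ≤ t) (hm : (t * c, t) ∈ X) : (s * c, s) ∈ X := by
  rcases hs.eq_or_lt with rfl | hs
  · simpa [fanVertex] using hX.vertex_mem
  rcases hst.eq_or_lt with rfl | hst
  · exact hm
  exact mem_of_connected hX.subset_fan hX.isCompact.isClosed hX.isConnected.isPreconnected hs hst
    hm hX.vertex_mem fun _ => hs.le

/-- The part of the leg in direction `c` between heights `s` and `t`. -/
def legSeg (c s t : ℝ) : Set (ℝ × ℝ) :=
  range fun u : Icc (0:ℝ) 1 => (((1 - (u : ℝ)) * s + u * t) * c, (1 - (u : ℝ)) * s + u * t)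

lemma isArc_legSeg (c : ℝ) {s t : ℝ} (hst : s ≠ t) :
    IsArc (legSeg c s t) (s * c, s) (t * c, t) := by
  let f : Icc (0:ℝ) 1 → ℝ × ℝ :=
    fun u => (((1 - (u : ℝ)) * s + u * t) * c, (1 - (u : ℝ)) * s + u * t)
  have hf : Continuous f := by fun_prop
  have hinj : Function.Injective f := by
    intro u v huv
    have h2 : (1 - (u : ℝ)) * s + u * t = (1 - (v : ℝ)) * s + v * t := congrArg Prod.snd huv
    have h3 : ((u : ℝ) - v) * (t - s) = 0 := by linarith
    rcases mul_eq_zero.1 h3 with h | h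
    · exact Subtype.ext (by linarith)
    · exact absurd (by linarith) hst
  refine ⟨(hf.isClosedEmbedding hinj).isEmbedding.toHomeomorph, ?_, ?_⟩
  · change f _ = _
    simp [f]
  · change f _ = _
    simp [f]

lemma mem_legSeg {c s t : ℝ} {p : ℝ × ℝ} (hp : p ∈ legSeg c s t) :
    ∃ r, min s t ≤ r ∧ r ≤ max s t ∧ p = (r * c, r) := by
  obtain ⟨u, rfl⟩ := hp
  refine ⟨_, ?_, ?_, rfl⟩
  · nlinarith [min_le_left s t, min_le_right s t, u.2.1, u.2.2]
  · nlinarith [le_max_left s t, le_max_right s t, u.2.1, u.2.2]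

lemma orderAtLeast_one {α : Type*} [TopologicalSpace α] {X A : Set α} {x b : α} (hA : A ⊆ X)
    (h : IsArc A x b) : OrderAtLeast X x 1 :=
  ⟨fun _ => A, fun _ => hA, fun _ => ⟨b, h⟩, fun i j hij => absurd (Subsingleton.elim i j) hij⟩

/-- A point of a leg which is neither the vertex nor the top of the leg has order at least two. -/
lemma IsSmoothFan.not_endpoint {X : Set (ℝ × ℝ)} (hX : IsSmoothFan X) {c s t : ℝ} (hs : 0 < s)
    (hst : s < t) (hm : (t * c, t) ∈ X) : (s * c, s) ∉ Endpoints X := by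
  rintro ⟨-, -, hn⟩
  apply hn
  have hinter : legSeg c s 0 ∩ legSeg c s t = {(s * c, s)} := by
    ext p
    constructor
    · rintro ⟨h1, h2⟩
      obtain ⟨r, -, hr, rfl⟩ := mem_legSeg h1
      obtain ⟨r', hr', -, h⟩ := mem_legSeg h2
      obtain rfl : r = r' := congrArg Prod.snd h
      rw [max_eq_left hs.le] at hr
      rw [min_eq_left hst.le] at hr'
      rw [mem_singleton_iff, le_antisymm hr hr']
    · rintro rfl
      exact ⟨⟨⟨0, by simp⟩, by simp⟩, ⟨⟨0, by simp⟩, by simp⟩⟩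
  refine ⟨![legSeg c s 0, legSeg c s t], ?_, ?_, ?_⟩
  · intro i
    fin_cases i
    · intro p hp
      obtain ⟨r, hr, hr', rfl⟩ := mem_legSeg hp
      rw [min_eq_right hs.le] at hr
      rw [max_eq_left hs.le] at hr'
      exact hX.below hr (hr'.trans hst.le) hm
    · intro p hp
      obtain ⟨r, hr, hr', rfl⟩ := mem_legSeg hp
      rw [min_eq_left hst.le] at hr
      rw [max_eq_right hst.le] at hr'
      exact hX.below (hs.le.trans hr) hr' hm
  · intro i
    fin_cases i
    · exact ⟨_, isArc_legSeg c hs.ne'⟩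
    · exact ⟨_, isArc_legSeg c hst.ne⟩
  · intro i j hij
    fin_cases i <;> fin_cases j
    · exact absurd rfl hij
    · exact hinter
    · change legSeg c s t ∩ legSeg c s 0 = _
      rw [inter_comm, hinter]
    · exact absurd rfl hij

/-- An arc in `X` starting at the top of a leg contains a terminal piece of that leg. -/
lemma IsSmoothFan.arc_contains {X : Set (ℝ × ℝ)} (hX : IsSmoothFan X) {c t : ℝ} (ht : 0 < t)
    (htop : ∀ τ, t < τ → (τ * c, τ) ∉ X) {A : Set (ℝ × ℝ)} {b : ℝ × ℝ} (hAX : A ⊆ X)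
    (hA : IsArc A (t * c, t) b) :
    ∃ s < t, ∀ r, s < r → r < t → (r * c, r) ∈ A := by
  obtain ⟨h, h0, h1⟩ := hA
  have hcompact : IsCompact A := by
    rw [isCompact_iff_compactSpace]
    exact h.compactSpace
  have hconn : IsPreconnected A := by
    rw [isPreconnected_iff_preconnectedSpace]
    exact h.surjective.denseRange.preconnectedSpace h.continuous
  have hm : (t * c, t) ∈ A := h0 ▸ (h _).2
  have hb : b ∈ A := h1 ▸ (h _).2
  have hne : b ≠ (t * c, t) := by
    intro hbt
    rw [← h0, ← h1] at hbt
    have := congrArg Subtype.val (h.injective (Subtype.ext hbt))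
    norm_num at this
  -- the height below which the arc has to leave the leg
  obtain ⟨s, hs0, hst, hs⟩ : ∃ s, 0 ≤ s ∧ s < t ∧ (b.1 = b.2 * c → b.2 ≤ s) := by
    by_cases hbc : b.1 = b.2 * c
    · have hbX : (b.2 * c, b.2) ∈ X := by rw [← hbc]; exact hAX hb
      refine ⟨max 0 b.2, le_max_left _ _, max_lt ht ?_, fun _ => le_max_right _ _⟩
      refine lt_of_le_of_ne (not_lt.1 fun hlt => htop _ hlt hbX) fun hbt => hne ?_
      rw [← hbt, ← hbc]
    · exact ⟨0, le_rfl, ht, fun h => absurd h hbc⟩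
  refine ⟨s, hst, fun r hsr hrt => ?_⟩
  exact mem_of_connected (hAX.trans hX.subset_fan) hcompact.isClosed hconn (hs0.trans_lt hsr) hrt
    hm hb fun h => (hs h).trans hsr.le

lemma IsSmoothFan.top_mem_endpoints {X : Set (ℝ × ℝ)} (hX : IsSmoothFan X) {c t : ℝ} (ht : 0 < t)
    (hm : (t * c, t) ∈ X) (htop : ∀ τ, t < τ → (τ * c, τ) ∉ X) : (t * c, t) ∈ Endpoints X := by
  refine ⟨hm, orderAtLeast_one ?_ (isArc_legSeg c ht.ne'), ?_⟩
  · intro p hp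
    obtain ⟨r, hr, hr', rfl⟩ := mem_legSeg hp
    rw [min_eq_right ht.le] at hr
    rw [max_eq_left ht.le] at hr'
    exact hX.below hr hr' hm
  · rintro ⟨A, hAX, hA, hinter⟩
    obtain ⟨b₀, h₀⟩ := hA 0
    obtain ⟨b₁, h₁⟩ := hA 1
    obtain ⟨s₀, hs₀, hA₀⟩ := hX.arc_contains ht htop (hAX 0) h₀
    obtain ⟨s₁, hs₁, hA₁⟩ := hX.arc_contains ht htop (hAX 1) h₁
    obtain ⟨r, hr, hrt⟩ := exists_between (max_lt hs₀ hs₁)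
    have : (r * c, r) ∈ A 0 ∩ A 1 :=
      ⟨hA₀ r ((le_max_left _ _).trans_lt hr) hrt, hA₁ r ((le_max_right _ _).trans_lt hr) hrt⟩
    rw [hinter 0 1 (by decide), mem_singleton_iff] at this
    exact hrt.ne (congrArg Prod.snd this)

/-! ### A point of zero-dimensionality -/

/-- Among the legs of `X` with direction in `[a, b]` and reaching at least height `t` there is one
at which the height of the leg is a lower semicontinuous function of the direction. The heights
form an upper semicontinuous function on a compact set, so this is an instance of Baire's theorem:
some direction avoids the frontiers of all the closed superlevel sets at rational levels. -/
lemma IsSmoothFan.exists_lsc_leg {X : Set (ℝ × ℝ)} (hX : IsSmoothFan X) {a b t : ℝ}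
    {c₀ : ℝ} (hc₀ : c₀ ∈ Icc a b) (hm : (t * c₀, t) ∈ X) :
    ∃ c ∈ Icc a b, (t * c, t) ∈ X ∧ ∀ q q', 0 ≤ q' → q' < q → (q * c, q) ∈ X →
      ∀ᶠ r in 𝓝 c, r ∈ Icc a b → (t * r, t) ∈ X → (q' * r, q') ∈ X := by
  let N : Set ℝ := {r | r ∈ Icc a b ∧ (t * r, t) ∈ X}
  have hcl : ∀ q : ℝ, IsClosed {r : ℝ | (q * r, q) ∈ X} := fun q =>
    hX.isCompact.isClosed.preimage (f := fun r : ℝ => (q * r, q)) (by fun_prop)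
  have hNc : IsCompact N := isCompact_Icc.inter_right (hcl t)
  have : CompactSpace N := isCompact_iff_compactSpace.1 hNc
  have : Nonempty N := ⟨⟨c₀, hc₀, hm⟩⟩
  let A : ℚ → Set N := fun q => {r | ((q : ℝ) * r, (q : ℝ)) ∈ X}
  have hA : ∀ q, IsClosed (A q) := fun q => (hcl q).preimage continuous_subtype_val
  obtain ⟨c, hc⟩ := (dense_iInter_of_isOpen (f := fun q => (frontier (A q))ᶜ)
    (fun q => isClosed_frontier.isOpen_compl)
    (fun q => interior_eq_empty_iff_dense_compl.1 (interior_frontier (hA q)))).nonempty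
  refine ⟨c, c.2.1, c.2.2, fun q q' hq' hqq' hq => ?_⟩
  obtain ⟨p, hp', hp⟩ := exists_rat_btwn hqq'
  have hcA : c ∈ A p := hX.below (hq'.trans hp'.le) hp.le hq
  have hcint : c ∈ interior (A p) := by
    by_contra hcon
    refine mem_iInter.1 hc p ?_
    rw [(hA p).frontier_eq]
    exact ⟨hcA, hcon⟩
  have hnhds := mem_interior_iff_mem_nhds.1 hcint
  rw [mem_nhds_subtype_iff_nhdsWithin, mem_nhdsWithin_iff_eventually] at hnhds
  filter_upwards [hnhds] with r hr h1 h2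
  obtain ⟨r', hr', rfl⟩ := hr ⟨h1, h2⟩
  exact hX.below hq' hp'.le hr'

lemma IsSmoothFan.exists_zeroDimPointAt {X : Set (ℝ × ℝ)} (hX : IsSmoothFan X)
    (hnd : ¬ X ⊆ closure (Endpoints X)) : ∃ z : Endpoints X, ZeroDimPointAt z := by
  -- a point other than the vertex around which there are no endpoints
  obtain ⟨c₀, t, ht, hm₀, hcl₀⟩ :
      ∃ c t, 0 < t ∧ (t * c, t) ∈ X ∧ (t * c, t) ∉ closure (Endpoints X) := by
    obtain ⟨x, hx, hxE⟩ := not_subset.1 hnd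
    obtain ⟨c, -, t, ht, rfl⟩ := hX.subset_fan hx
    rcases ht.1.eq_or_lt with rfl | ht0
    · obtain ⟨y, hy, hy0⟩ : ∃ y ∈ X, y ≠ fanVertex := by
        obtain ⟨y₁, h₁, y₂, h₂, hne⟩ := hX.nondegenerate
        by_cases h : y₁ = fanVertex
        · exact ⟨y₂, h₂, fun h' => hne (h.trans h'.symm)⟩
        · exact ⟨y₁, h₁, h⟩
      obtain ⟨d, -, τ, hτ, rfl⟩ := hX.subset_fan hy
      have hτ0 : 0 < τ := by
        refine lt_of_le_of_ne hτ.1 ?_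
        rintro rfl
        exact hy0 (by simp [fanVertex])
      have hopen : IsOpen {s : ℝ | (s * d, s) ∉ closure (Endpoints X)} :=
        isClosed_closure.isOpen_compl.preimage (f := fun s : ℝ => (s * d, s)) (by fun_prop)
      have h0 : (0 : ℝ) ∈ {s : ℝ | (s * d, s) ∉ closure (Endpoints X)} := by
        simpa using hxE
      obtain ⟨δ, hδ, hball⟩ := Metric.isOpen_iff.1 hopen 0 h0
      have hpos : 0 < min (δ / 2) τ := lt_min (by linarith) hτ0
      refine ⟨d, _, hpos, hX.below hpos.le (min_le_right _ _) hy, hball ?_⟩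
      rw [Metric.mem_ball, Real.dist_eq, sub_zero, abs_of_pos hpos]
      linarith [min_le_left (δ / 2) τ]
    · exact ⟨c, t, ht0, hx, hxE⟩
  have hopen₀ : IsOpen {r : ℝ | (t * r, t) ∉ closure (Endpoints X)} :=
    isClosed_closure.isOpen_compl.preimage (f := fun r : ℝ => (t * r, t)) (by fun_prop)
  obtain ⟨δ₀, hδ₀, hball₀⟩ := Metric.isOpen_iff.1 hopen₀ c₀ hcl₀
  obtain ⟨a₁, b₁, ha₁, hb₁, h1, h2, h3, h4⟩ := exists_cantor_gap_nhd c₀ hδ₀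
  have hlevel : ∀ r, a₁ < r → r < b₁ → (t * r, t) ∉ Endpoints X := fun r hr hr' hE =>
    hball₀ (show r ∈ Metric.ball c₀ δ₀ by
      rw [Metric.mem_ball, Real.dist_eq, abs_lt]
      constructor <;> linarith) (subset_closure hE)
  have hdir : ∀ {r s : ℝ}, 0 < s → (s * r, s) ∈ X → r ∈ cantorSet := by
    intro r s hs h
    obtain ⟨r', hr', s', -, h'⟩ := hX.subset_fan h
    obtain rfl : s = s' := congrArg Prod.snd h'
    have : s * r = s * r' := congrArg Prod.fst h'
    rwa [mul_left_cancel₀ hs.ne' this]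
  obtain ⟨c, hcI, hcm, hlsc⟩ := hX.exists_lsc_leg (a := a₁) (b := b₁) ⟨h2.le, h3.le⟩ hm₀
  have hcC := hdir ht hcm
  have hac : a₁ < c := lt_of_le_of_ne hcI.1 fun h => ha₁ (h ▸ hcC)
  have hcb : c < b₁ := lt_of_le_of_ne hcI.2 fun h => hb₁ (h ▸ hcC)
  -- the top of the leg in direction `c`
  obtain ⟨h, hhm, htop⟩ : ∃ h, (h * c, h) ∈ X ∧ ∀ τ, h < τ → (τ * c, τ) ∉ X := by
    have hT : IsCompact {τ : ℝ | (τ * c, τ) ∈ X} := by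
      refine isCompact_Icc.of_isClosed_subset (s := Icc (0:ℝ) 1)
        (hX.isCompact.isClosed.preimage (f := fun τ : ℝ => (τ * c, τ)) (by fun_prop)) ?_
      intro τ hτ
      obtain ⟨r', -, s', hs', h'⟩ := hX.subset_fan hτ
      obtain rfl : τ = s' := congrArg Prod.snd h'
      exact hs'
    obtain ⟨h, hh, hmax⟩ := hT.exists_isGreatest ⟨t, hcm⟩
    exact ⟨h, hh, fun τ hτ hm => not_le.2 hτ (hmax hm)⟩
  have hth : t ≤ h := not_lt.1 fun hlt => htop t hlt hcm
  have hh0 : 0 < h := ht.trans_le hth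
  have hE : (h * c, h) ∈ Endpoints X := hX.top_mem_endpoints hh0 hhm htop
  have hth' : t < h := lt_of_le_of_ne hth fun heq => hlevel c hac hcb (heq ▸ hE)
  refine ⟨⟨_, hE⟩, fun U hU => ?_⟩
  obtain ⟨U', hUnhds, hUU'⟩ := mem_nhds_induced _ _ _ |>.1 hU
  have hcont : ContinuousAt (fun w : ℝ × ℝ => (w.2 * w.1, w.2)) (c, h) := by fun_prop
  obtain ⟨ε, hε, hball⟩ := Metric.mem_nhds_iff.1 (hcont.preimage_mem_nhds hUnhds)
  -- levels just below and just above the top of the leg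
  let q₁ := max (h / 2) (h - ε / 2)
  let q₂ := h + ε / 2
  have hq₁0 : 0 < q₁ := lt_max_of_lt_left (by linarith)
  have hq₁h : q₁ < h := max_lt (by linarith) (by linarith)
  have hq₁ε : h - ε / 2 ≤ q₁ := le_max_right _ _
  have hq₂h : h < q₂ := by simp only [q₂]; linarith
  have hlow := hlsc h q₁ hq₁0.le hq₁h hhm
  have hupp : ∀ᶠ r in 𝓝 c, (q₂ * r, q₂) ∉ X :=
    (hX.isCompact.isClosed.isOpen_compl.preimage (f := fun r : ℝ => (q₂ * r, q₂))
      (by fun_prop)).mem_nhds (htop q₂ hq₂h)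
  obtain ⟨δ₁, hδ₁, hnear⟩ := Metric.eventually_nhds_iff.1 (hlow.and hupp)
  let δ := min (min δ₁ ε) (min (c - a₁) (b₁ - c))
  have hδ : 0 < δ := lt_min (lt_min hδ₁ hε) (lt_min (by linarith) (by linarith))
  have hδ1 : δ ≤ δ₁ := (min_le_left _ _).trans (min_le_left _ _)
  have hδ2 : δ ≤ ε := (min_le_left _ _).trans (min_le_right _ _)
  have hδ3 : δ ≤ c - a₁ := (min_le_right _ _).trans (min_le_left _ _)
  have hδ4 : δ ≤ b₁ - c := (min_le_right _ _).trans (min_le_right _ _)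
  obtain ⟨a, b, ha, hb, k1, k2, k3, k4⟩ := exists_cantor_gap_nhd c hδ
  have hsub : Endpoints X ⊆ X := fun e he => he.1
  have hcov := subset_wedge_union (hsub.trans hX.subset_fan) ha hb ht
    fun r hr hr' => hlevel r (by linarith) (by linarith)
  refine ⟨Subtype.val ⁻¹' wedge a b t, ⟨?_, ?_⟩, ⟨hth', ?_, ?_⟩, ?_⟩
  · have : (Subtype.val ⁻¹' wedge a b t : Set (Endpoints X)) =
        (Subtype.val ⁻¹' coWedge a b t)ᶜ := by
      ext e
      refine ⟨fun he => disjoint_left.1 (disjoint_wedge a b t) he, fun he => ?_⟩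
      exact (hcov e.2).resolve_right he
    rw [this]
    exact ((isOpen_coWedge a b t).preimage continuous_subtype_val).isClosed_compl
  · exact (isOpen_wedge a b t).preimage continuous_subtype_val
  · dsimp only; nlinarith
  · dsimp only; nlinarith
  · rintro ⟨e, he⟩ ⟨g1, g2, g3⟩
    apply hUU'
    obtain ⟨r, hr, τ, hτ, rfl⟩ := hX.subset_fan he.1
    dsimp only at g1 g2 g3
    have hτ0 : 0 < τ := ht.trans g1
    have har : a < r := by nlinarith
    have hrb : r < b := by nlinarith
    have hrc : |r - c| < δ := abs_lt.2 ⟨by linarith, by linarith⟩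
    obtain ⟨hl, hu⟩ := hnear (show dist r c < δ₁ from hrc.trans_le hδ1)
    have hql : q₁ ≤ τ := not_lt.1 fun hlt => hX.not_endpoint hτ0 hlt
      (hl ⟨by linarith, by linarith⟩ (hX.below ht.le g1.le he.1)) he
    have hqu : τ < q₂ := not_le.1 fun hle => hu (hX.below (hh0.trans hq₂h).le hle he.1)
    refine hball (a := (r, τ)) ?_
    rw [Metric.mem_ball, Prod.dist_eq, max_lt_iff]
    refine ⟨hrc.trans_le hδ2, ?_⟩
    change |τ - h| < ε
    simp only [q₂] at hqu
    rw [abs_lt]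
    constructor <;> linarith

/-! ### Complete Erdős space -/

/-- Within a relatively open subset of complete Erdős space, any coordinate of a point may be
replaced by some `1/m`, even if it is `0`. -/
lemma exists_replace {V : Set (lp (fun _ : ℕ => ℝ) 2)} {y : lp (fun _ : ℕ => ℝ) 2} (n : ℕ)
    (hyE : y ∈ ErdosSpace)
    (hV : ∃ O, IsOpen O ∧ V = O ∩ ErdosSpace) (hy : y ∈ V) :
    ∃ m : ℕ, 0 < m ∧ y + lp.single (E := fun _ : ℕ => ℝ) 2 n (1 / (m : ℝ) - y n) ∈ V := by
  rcases hyE n with h | ⟨m, hm, h⟩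
  · obtain ⟨O, hO, rfl⟩ := hV
    have hlim : Filter.Tendsto
        (fun m : ℕ => y + lp.single (E := fun _ : ℕ => ℝ) 2 n (1 / (m : ℝ) - y n)) Filter.atTop (𝓝 y) := by
      have h1 : Filter.Tendsto (fun m : ℕ => (1 : ℝ) / m - y n) Filter.atTop (𝓝 0) := by
        simpa [h] using tendsto_one_div_atTop_nhds_zero_nat (𝕜 := ℝ)
      have h2 := ((lp.isometry_single (E := fun _ : ℕ => ℝ) (p := 2) n).continuous.tendsto 0).comp h1
      simpa using h2.const_add y
    obtain ⟨m, hm, hm0⟩ := ((hlim.eventually (hO.mem_nhds hy.1)).and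
      (Filter.eventually_gt_atTop 0)).exists
    refine ⟨m, hm0, hm, fun i => ?_⟩
    by_cases hi : i = n
    · subst hi
      exact Or.inr ⟨m, hm0, by simp⟩
    · simpa [hi] using hyE i
  · refine ⟨m, hm, ?_⟩
    rw [h, sub_self, lp.single_zero, add_zero]
    exact hy

/-- A theorem of Erdős: a nonempty relatively clopen subset `V` of complete Erdős space is unbounded.
Starting from `z ∈ V`, the coordinates are replaced one after the other by the largest `1/m` which
does not lead out of `V`. If `V` is bounded, then the resulting points converge in `V`, while the
points with the next larger value in the last replaced coordinate converge to the same limit from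
outside of `V`. -/
lemma erdos_no_bounded_clopen {V : Set (lp (fun _ : ℕ => ℝ) 2)} (hVE : V ⊆ ErdosSpace)
    (hopen : ∃ O, IsOpen O ∧ V = O ∩ ErdosSpace) (hclosed : ∃ F, IsClosed F ∧ V = F ∩ ErdosSpace)
    {z : lp (fun _ : ℕ => ℝ) 2} (hz : z ∈ V) {R : ℝ} (hR : ∀ y ∈ V, ‖y - z‖ ≤ R) : False := by
  classical
  have hex : ∀ (n : ℕ) (y : V), ∃ m : ℕ, 0 < m ∧
      y.1 + lp.single (E := fun _ : ℕ => ℝ) 2 n (1 / (m : ℝ) - y.1 n) ∈ V :=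
    fun n y => exists_replace n (hVE y.2) hopen y.2
  -- the least admissible denominator, i.e. the largest admissible value of the coordinate
  let M : ℕ → V → ℕ := fun n y => Nat.find (hex n y)
  let Y : ℕ → V := fun n => Nat.rec ⟨z, hz⟩
    (fun n y => ⟨_, (Nat.find_spec (hex n y)).2⟩) n
  let x : ℕ → ℝ := fun n => 1 / (M n (Y n) : ℝ)
  have hYsucc : ∀ n : ℕ, (Y (n + 1)).1 =
      (Y n).1 + lp.single (E := fun _ : ℕ => ℝ) 2 n (x n - (Y n).1 n) := by
    intro n
    rfl
  have hYsum : ∀ n, (Y n).1 =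
      z + ∑ i ∈ Finset.range n, lp.single (E := fun _ : ℕ => ℝ) 2 i (x i - z i) := by
    intro n
    induction n with
    | zero => simp [Y]
    | succ n ih =>
      have hcoord : (Y n).1 n = z n := by
        rw [ih, lp.coeFn_add, Pi.add_apply, lp.coeFn_sum, Finset.sum_apply,
          Finset.sum_eq_zero, add_zero]
        intro i hi
        exact lp.single_apply_ne _ _ _ (Finset.mem_range.1 hi).ne'
      rw [hYsucc, hcoord, Finset.sum_range_succ, ← add_assoc, ← ih]
  have hR0 : 0 ≤ R := (norm_nonneg _).trans (hR z hz)
  -- boundedness of `V` makes the limit of the coordinates square summable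
  have hmem : Memℓp (fun i => x i - z i) (2 : ENNReal) := by
    refine memℓp_gen' (C := R ^ (2 : ENNReal).toReal) fun s => ?_
    obtain ⟨n, hn⟩ := s.exists_nat_subset_range
    calc _ ≤ ∑ i ∈ Finset.range n, ‖x i - z i‖ ^ (2 : ENNReal).toReal :=
          Finset.sum_le_sum_of_subset_of_nonneg hn fun _ _ _ => by positivity
      _ = ‖∑ i ∈ Finset.range n, lp.single (E := fun _ : ℕ => ℝ) 2 i (x i - z i)‖
            ^ (2 : ENNReal).toReal :=
          (lp.norm_sum_single (by norm_num) _ _).symm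
      _ ≤ _ := by
        refine Real.rpow_le_rpow (norm_nonneg _) ?_ (by norm_num)
        have := hR _ (Y n).2
        rwa [hYsum, add_sub_cancel_left] at this
  let d : lp (fun _ : ℕ => ℝ) 2 := ⟨_, hmem⟩
  have hYlim : Filter.Tendsto (fun n => (Y n).1) Filter.atTop (𝓝 (z + d)) := by
    have h := (lp.hasSum_single (E := fun _ : ℕ => ℝ) (p := 2) (by norm_num) d).tendsto_sum_nat
    refine (h.const_add z).congr fun n => ?_
    rw [hYsum]
  have hcoord : ∀ n, (z + d) n = x n := fun n => by
    change z n + (x n - z n) = x n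
    ring
  have hMpos : ∀ n, 0 < M n (Y n) := fun n => (Nat.find_spec (hex n (Y n))).1
  have hlimE : z + d ∈ ErdosSpace := fun n => Or.inr ⟨M n (Y n), hMpos n, hcoord n⟩
  have hlimV : z + d ∈ V := by
    obtain ⟨F, hF, hVF⟩ := hclosed
    rw [hVF]
    refine ⟨hF.mem_of_tendsto hYlim (Filter.Eventually.of_forall fun n => ?_), hlimE⟩
    exact (hVF.subset (Y n).2).1
  have hx0 : Filter.Tendsto x Filter.atTop (𝓝 0) := by
    have h1 : Summable fun i => ‖(z + d) i‖ ^ (2 : ENNReal).toReal :=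
      (lp.memℓp (z + d)).summable (by norm_num)
    have h2 := h1.tendsto_atTop_zero
    have h3 : Filter.Tendsto (fun n => Real.sqrt (‖(z + d) n‖ ^ (2 : ENNReal).toReal))
        Filter.atTop (𝓝 0) := by
      simpa using h2.sqrt
    refine tendsto_zero_iff_norm_tendsto_zero.2 (h3.congr fun n => ?_)
    rw [hcoord, ENNReal.toReal_ofNat, Real.rpow_ofNat, Real.sqrt_sq (norm_nonneg _)]
  have hMlim : Filter.Tendsto (fun n => M n (Y n)) Filter.atTop Filter.atTop := by
    have h1 : Filter.Tendsto (fun n => (x n)⁻¹) Filter.atTop Filter.atTop :=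
      Filter.Tendsto.inv_tendsto_nhdsGT_zero (tendsto_nhdsWithin_iff.2 ⟨hx0,
        Filter.Eventually.of_forall fun n => mem_Ioi.2 (by
          have : (0 : ℝ) < M n (Y n) := Nat.cast_pos.2 (hMpos n)
          positivity)⟩)
    refine tendsto_natCast_atTop_iff (R := ℝ) |>.1 (h1.congr fun n => ?_)
    simp [x]
  -- replacing the `n`-th coordinate by the next larger value leaves `V`, at vanishing cost
  let W : ℕ → lp (fun _ : ℕ => ℝ) 2 := fun n =>
    (Y n).1 + lp.single (E := fun _ : ℕ => ℝ) 2 n (1 / ((M n (Y n) - 1 : ℕ) : ℝ) - (Y n).1 n)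
  have hWlim : Filter.Tendsto W Filter.atTop (𝓝 (z + d)) := by
    have hM1 : Filter.Tendsto (fun n => M n (Y n) - 1) Filter.atTop Filter.atTop :=
      (Filter.tendsto_sub_atTop_nat 1).comp hMlim
    have h1 : Filter.Tendsto (fun n => 1 / ((M n (Y n) - 1 : ℕ) : ℝ) - x n) Filter.atTop (𝓝 0) := by
      have := ((tendsto_one_div_atTop_nhds_zero_nat (𝕜 := ℝ)).comp hM1).sub hx0
      simpa using this
    have h2 : Filter.Tendsto (fun n => lp.single (E := fun _ : ℕ => ℝ) 2 n
        (1 / ((M n (Y n) - 1 : ℕ) : ℝ) - x n)) Filter.atTop (𝓝 0) := by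
      refine tendsto_zero_iff_norm_tendsto_zero.2 ?_
      refine (tendsto_zero_iff_norm_tendsto_zero.1 h1).congr fun n => ?_
      rw [lp.norm_single (by norm_num)]
    have h3 := (hYlim.comp (Filter.tendsto_add_atTop_nat 1)).add h2
    rw [add_zero] at h3
    refine h3.congr fun n => ?_
    simp only [Function.comp_apply, hYsucc, W, add_assoc, ← lp.single_add]
    congr 2
    ring
  obtain ⟨O, hO, hVO⟩ := hopen
  have hlimO : z + d ∈ O := by rw [hVO] at hlimV; exact hlimV.1
  obtain ⟨n, hnO, hn⟩ := ((hWlim.eventually (hO.mem_nhds hlimO)).and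
    (hMlim.eventually (Filter.eventually_ge_atTop 2))).exists
  refine Nat.find_min (hex n (Y n)) (m := M n (Y n) - 1) (Nat.sub_lt (hMpos n) one_pos)
    ⟨by omega, ?_⟩
  change W n ∈ V
  rw [hVO]
  refine ⟨hnO, fun i => ?_⟩
  by_cases hi : i = n
  · subst hi
    exact Or.inr ⟨M i (Y i) - 1, by omega, by simp [W]⟩
  · simpa [W, hi] using hVE (Y n).2 i

lemma erdos_not_zeroDimPointAt (z : ErdosSpace) : ¬ ZeroDimPointAt z := by
  intro h
  obtain ⟨V, hV, hzV, hVU⟩ := h (Metric.ball z 1) (Metric.ball_mem_nhds z one_pos)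
  refine erdos_no_bounded_clopen (V := Subtype.val '' V) (z := z) (R := 1)
    (Subtype.coe_image_subset _ _) ?_ ?_ ⟨z, hzV, rfl⟩ ?_
  · obtain ⟨O, hO, rfl⟩ := isOpen_induced_iff.1 hV.isOpen
    exact ⟨O, hO, by rw [Subtype.image_preimage_coe, inter_comm]⟩
  · obtain ⟨F, hF, rfl⟩ := isClosed_induced_iff.1 hV.isClosed
    exact ⟨F, hF, by rw [Subtype.image_preimage_coe, inter_comm]⟩
  · rintro _ ⟨y, hy, rfl⟩
    have := Metric.mem_ball.1 (hVU hy)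
    rw [Subtype.dist_eq, dist_eq_norm] at this
    exact this.le

lemma ZeroDimPointAt.of_homeomorph {α β : Type*} [TopologicalSpace α] [TopologicalSpace β]
    (f : α ≃ₜ β) {z : α} (h : ZeroDimPointAt z) : ZeroDimPointAt (f z) := by
  intro U hU
  obtain ⟨V, hV, hz, hVU⟩ := h (f ⁻¹' U) (f.continuous.continuousAt.preimage_mem_nhds hU)
  refine ⟨f.symm ⁻¹' V, hV.preimage f.symm.continuous, by simpa using hz, fun y hy => ?_⟩
  simpa using hVU hy

/-- If `X` is a smooth fan and `E(X)` is not dense in `X`, then `E(X)`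
has a point of zero-dimensionality; in particular `E(X)` is not homeomorphic to complete
Erdős space. -/
theorem endpoints_not_dense (X : Set (ℝ × ℝ)) (hX : IsSmoothFan X)
    (hnd : ¬ X ⊆ closure (Endpoints X)) :
    (∃ z : ↥(Endpoints X), ZeroDimPointAt z) ∧
    IsEmpty (↥(Endpoints X) ≃ₜ ↥ErdosSpace) := by
  obtain ⟨z, hz⟩ := hX.exists_zeroDimPointAt hnd
  exact ⟨⟨z, hz⟩, ⟨fun f => erdos_not_zeroDimPointAt (f z) (hz.of_homeomorph f)⟩⟩

end SmoothFanPaper
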